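/- Let A be a finite alphabet with |A| ≥ 2. The action of G* on Ω^0 is minimal: every G*-orbit in Ω^0 is dense. -/

import Mathlib

/-!
An automorphism fixing every constant configuration lies in `G*`, so it suffices to find, for
`x, y ∈ Ω^a` and `n ≥ 1`, such an automorphism moving `x` to a point that agrees with `y` on
`[0, n]`. Let `u = φ x`, and let `v` be `φ y` up to position `n` and `φ x` beyond. The automorphism
exchanges the words that `u` and `v` spell on a finite window, wherever either occurs.

This is a well-defined involution as soon as the cells changed at one occurrence never meet the
window of another. Both words spell `a` up to position `0` and something else at position `1`, so
the window can be chosen as follows: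

* if `u M ≠ a` for some `M > n`, then `(-M, M]` makes occurrences disjoint: the first `M` cells of
  an occurrence spell `a`, whereas the last `M` start and end with a symbol other than `a`;
* otherwise `u` and `v` spell `a` beyond `n`, and `(-n, 3 n]` keeps occurrences `3 n` apart.
-/

open Filter MeasureTheory

/-- The group of self-homeomorphisms of a topological space,
with `(f * g) x = f (g x)`. -/
instance homeoGroup (X : Type*) [TopologicalSpace X] : Group (X ≃ₜ X) where
  mul f g := g.trans f
  one := Homeomorph.refl X
  inv := Homeomorph.symm
  mul_assoc f g h := Homeomorph.ext fun _ => rfl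
  one_mul f := Homeomorph.ext fun _ => rfl
  mul_one f := Homeomorph.ext fun _ => rfl
  inv_mul_cancel f := Homeomorph.ext f.symm_apply_apply

/-- The left shift `(σ x) m = x (m+1)` on `A^ℤ`, as a homeomorphism. -/
def shiftHomeo (A : Type*) [TopologicalSpace A] : (ℤ → A) ≃ₜ (ℤ → A) where
  toFun x := fun m => x (m + 1)
  invFun x := fun m => x (m - 1)
  left_inv x := funext fun m => by simp
  right_inv x := funext fun m => by simp
  continuous_toFun := continuous_pi fun m => continuous_apply (m + 1)
  continuous_invFun := continuous_pi fun m => continuous_apply (m - 1)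

/-- `Aut(A^ℤ)`: the group of homeomorphisms of `A^ℤ` commuting with the shift. -/
def ShiftAut (A : Type*) [TopologicalSpace A] : Subgroup ((ℤ → A) ≃ₜ (ℤ → A)) :=
  Subgroup.centralizer {shiftHomeo A}

/-- `Ω`: the space of one-sided configurations whose zeroth symbol differs from
the first. -/
def OmegaSet (A : Type*) : Set (ℕ → A) := {x | x 0 ≠ x 1}

/-- `Ω^a`: the elements of `Ω` whose zeroth symbol is `a`. -/
def OmegaA (A : Type*) (a : A) : Set (ℕ → A) := {x | x 0 = a ∧ x 0 ≠ x 1}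

/-- `φ : Ω → A^ℤ_*` prepends an infinite constant `x 0` prefix to `x`. -/
def phiMap (A : Type*) (x : ℕ → A) : ℤ → A :=
  fun m => if m ≤ 0 then x 0 else x m.toNat

/-- `ℓ(y)`: the last coordinate of the constant prefix of `y ∈ A^ℤ_*`. -/
noncomputable def ellVal (A : Type*) (y : ℤ → A) : ℤ :=
  sInf {m : ℤ | y m ≠ y (m + 1)}

/-- The action of `Aut(A^ℤ)` on `Ω`: `g • x = ψ (g (φ x))`, where
`ψ(y) = φ⁻¹(σ^{ℓ(y)} y)`, i.e. `(g • x) n = (g (φ x)) (ℓ (g (φ x)) + n)`. -/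
noncomputable def omegaAct (A : Type*) [TopologicalSpace A]
    (g : (ℤ → A) ≃ₜ (ℤ → A)) (x : ℕ → A) : ℕ → A :=
  fun n => g (phiMap A x) (ellVal A (g (phiMap A x)) + n)

/-- `G* = ∩_{a ∈ A} G^a`, where `G^a` is the set of automorphisms that
preserve `Ω^a` under the action on `Ω`. -/
def Gstar (A : Type*) [TopologicalSpace A] : Set ((ℤ → A) ≃ₜ (ℤ → A)) :=
  {g | g ∈ ShiftAut A ∧ ∀ a : A, omegaAct A g '' OmegaA A a = OmegaA A a}

/-! ### Configurations with a constant prefix -/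

section Prefix

variable {A : Type*} {a : A} {t : ℤ} {c : ℤ → A}

/-- The configuration `c` lies in `A^ℤ_*`, its constant prefix spells `a`, and `t` is the last
coordinate of this prefix. This describes `ℓ(c) = t` without an infimum. -/
structure IsPrefixEnd (a : A) (t : ℤ) (c : ℤ → A) : Prop where
  eq_of_le : ∀ m ≤ t, c m = a
  succ_ne : c (t + 1) ≠ a

/-- The map `ψ : A^ℤ_* → Ω`, which reads a configuration from the end of its constant prefix
onwards. Outside `A^ℤ_*` its values are junk. -/
noncomputable def psiMap (c : ℤ → A) : ℕ → A := fun n => c (ellVal A c + n)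

namespace IsPrefixEnd

lemma ellVal_eq (h : IsPrefixEnd a t c) : ellVal A c = t := by
  have hleast : IsLeast {m : ℤ | c m ≠ c (m + 1)} t := by
    refine ⟨fun heq => h.succ_ne (heq ▸ h.eq_of_le t le_rfl), fun m hm => ?_⟩
    by_contra hlt
    exact hm (by rw [h.eq_of_le m (by omega), h.eq_of_le (m + 1) (by omega)])
  exact hleast.csInf_eq

lemma psiMap_apply (h : IsPrefixEnd a t c) (n : ℕ) : psiMap c n = c (t + n) := by
  rw [psiMap, h.ellVal_eq]

lemma ne_const (h : IsPrefixEnd a t c) : c ≠ Function.const ℤ a := by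
  rintro rfl
  exact h.succ_ne rfl

lemma eventually_atBot_eq (h : IsPrefixEnd a t c) : ∀ᶠ m in atBot, c m = a :=
  (eventually_le_atBot t).mono h.eq_of_le

lemma translate (h : IsPrefixEnd a t c) (s : ℤ) :
    IsPrefixEnd a (t - s) fun m => c (m + s) where
  eq_of_le m hm := h.eq_of_le _ (by omega)
  succ_ne := by
    rw [sub_add_eq_add_sub, sub_add_cancel]
    exact h.succ_ne

lemma psiMap_translate (h : IsPrefixEnd a t c) (s : ℤ) :
    psiMap (fun m => c (m + s)) = psiMap c := by
  funext n
  rw [(h.translate s).psiMap_apply, h.psiMap_apply]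
  congr 1
  ring

lemma psiMap_mem_omegaA (h : IsPrefixEnd a t c) : psiMap c ∈ OmegaA A a := by
  have h0 : psiMap c 0 = a := by simpa [h.psiMap_apply] using h.eq_of_le t le_rfl
  have h1 : psiMap c 1 ≠ a := by simpa [h.psiMap_apply] using h.succ_ne
  exact ⟨h0, h0 ▸ h1.symm⟩

lemma phiMap_psiMap (h : IsPrefixEnd a t c) : phiMap A (psiMap c) = fun m => c (m + t) := by
  funext m
  rw [phiMap]
  split_ifs with hm
  · rw [h.psiMap_apply, h.eq_of_le _ (by simp), h.eq_of_le _ (by omega)]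
  · rw [h.psiMap_apply]
    congr 1
    omega

end IsPrefixEnd

lemma exists_isPrefixEnd (hprefix : ∀ᶠ m in atBot, c m = a) (hne : c ≠ Function.const ℤ a) :
    ∃ t, IsPrefixEnd a t c := by
  obtain ⟨s, hs⟩ := eventually_atBot.1 hprefix
  obtain ⟨t, ht, hmin⟩ := Int.exists_least_of_bdd (P := fun m => c m ≠ a)
    ⟨s, fun m hm => not_lt.1 fun hlt => hm (hs m hlt.le)⟩ (Function.ne_iff.1 hne)
  refine ⟨t - 1, fun m hm => ?_, by simpa using ht⟩
  by_contra hma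
  have := hmin m hma
  omega

lemma phiMap_natCast (x : ℕ → A) (k : ℕ) : phiMap A x k = x k := by
  rcases k.eq_zero_or_pos with rfl | hk
  · simp [phiMap]
  · simp [phiMap, hk.ne']

lemma isPrefixEnd_phiMap {x : ℕ → A} (hx : x ∈ OmegaA A a) : IsPrefixEnd a 0 (phiMap A x) where
  eq_of_le m hm := by rw [phiMap, if_pos hm, hx.1]
  succ_ne := by
    have h1 : phiMap A x (0 + 1) = x 1 := phiMap_natCast x 1
    rw [h1, ← hx.1]
    exact hx.2.symm

lemma psiMap_phiMap {x : ℕ → A} (hx : x ∈ OmegaA A a) : psiMap (phiMap A x) = x := by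
  funext n
  rw [(isPrefixEnd_phiMap hx).psiMap_apply, zero_add, phiMap_natCast]

end Prefix

/-! ### Automorphisms fixing constant configurations -/

section Action

variable {A : Type*} [TopologicalSpace A] {a : A} {c : ℤ → A} {x : ℕ → A}
  {g h : (ℤ → A) ≃ₜ (ℤ → A)}

lemma shiftHomeo_zpow_apply (t : ℤ) (c : ℤ → A) :
    (shiftHomeo A ^ t) c = fun m => c (m + t) := by
  induction t generalizing c with
  | zero => simp
  | succ n ih =>
    rw [zpow_add_one]
    refine (ih (shiftHomeo A c)).trans (funext fun m => ?_)
    exact congrArg c (add_assoc m n 1)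
  | pred n ih =>
    rw [zpow_sub_one]
    refine (ih ((shiftHomeo A).symm c)).trans (funext fun m => ?_)
    exact congrArg c (add_sub_assoc m (-n) 1)

lemma apply_translate_of_mem_shiftAut (hg : g ∈ ShiftAut A) (c : ℤ → A) (t : ℤ) :
    g (fun m => c (m + t)) = fun m => g c (m + t) := by
  have hcomm : Commute g (shiftHomeo A) := Subgroup.mem_centralizer_singleton_iff.1 hg
  rw [← shiftHomeo_zpow_apply, ← shiftHomeo_zpow_apply]
  exact DFunLike.congr_fun (hcomm.zpow_right t).eq c

variable [DiscreteTopology A]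

/-- The translates of `c` to the right converge to a constant configuration, which `g` fixes. -/
lemma eventually_atBot_apply_eq (hg : g ∈ ShiftAut A)
    (hga : g (Function.const ℤ a) = Function.const ℤ a) (hc : ∀ᶠ m in atBot, c m = a) :
    ∀ᶠ m in atBot, g c m = a := by
  have htranslates : Tendsto (fun t m => c (m + t)) atBot (nhds (Function.const ℤ a)) :=
    tendsto_pi_nhds.2 fun m => tendsto_nhds_of_eventually_eq <|
      (tendsto_atBot_add_const_left atBot m tendsto_id).eventually hc
  have himages : Tendsto (fun t => g (fun m => c (m + t)) 0) atBot (nhds a) := by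
    have hlim := (g.continuous.tendsto _).comp htranslates
    rw [hga] at hlim
    exact tendsto_pi_nhds.1 hlim 0
  simpa [apply_translate_of_mem_shiftAut hg] using himages

lemma IsPrefixEnd.exists_apply {t : ℤ} (hc : IsPrefixEnd a t c) (hg : g ∈ ShiftAut A)
    (hga : g (Function.const ℤ a) = Function.const ℤ a) : ∃ s, IsPrefixEnd a s (g c) :=
  exists_isPrefixEnd (eventually_atBot_apply_eq hg hga hc.eventually_atBot_eq)
    fun hconst => hc.ne_const (g.injective (hconst.trans hga.symm))

lemma omegaAct_mem_omegaA (hg : g ∈ ShiftAut A)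
    (hga : g (Function.const ℤ a) = Function.const ℤ a) (hx : x ∈ OmegaA A a) :
    omegaAct A g x ∈ OmegaA A a := by
  obtain ⟨s, hs⟩ := (isPrefixEnd_phiMap hx).exists_apply hg hga
  exact hs.psiMap_mem_omegaA

lemma omegaAct_mul (hg : g ∈ ShiftAut A) (hga : g (Function.const ℤ a) = Function.const ℤ a)
    (hh : h ∈ ShiftAut A) (hha : h (Function.const ℤ a) = Function.const ℤ a)
    (hx : x ∈ OmegaA A a) : omegaAct A (g * h) x = omegaAct A g (omegaAct A h x) := by
  obtain ⟨s, hs⟩ := (isPrefixEnd_phiMap hx).exists_apply hh hha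
  obtain ⟨t, ht⟩ := hs.exists_apply hg hga
  change psiMap (g (h (phiMap A x))) = psiMap (g (phiMap A (psiMap (h (phiMap A x)))))
  rw [hs.phiMap_psiMap, apply_translate_of_mem_shiftAut hg, ht.psiMap_translate]

lemma mem_Gstar_of_apply_const (hg : g ∈ ShiftAut A)
    (hconst : ∀ a, g (Function.const ℤ a) = Function.const ℤ a) : g ∈ Gstar A := by
  have hg' : g⁻¹ ∈ ShiftAut A := inv_mem hg
  have hconst' : ∀ a, g⁻¹ (Function.const ℤ a) = Function.const ℤ a := fun a =>
    (g.symm_apply_eq).2 (hconst a).symm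
  refine ⟨hg, fun a => Set.Subset.antisymm ?_ fun x hx => ?_⟩
  · rintro _ ⟨x, hx, rfl⟩
    exact omegaAct_mem_omegaA hg (hconst a) hx
  · refine ⟨omegaAct A g⁻¹ x, omegaAct_mem_omegaA hg' (hconst' a) hx, ?_⟩
    rw [← omegaAct_mul hg (hconst a) hg' (hconst' a) hx, mul_inv_cancel]
    exact psiMap_phiMap hx

end Action

/-! ### Exchanging two words -/

section Exchange

variable {A : Type*}

/-- One of the two words that `u` and `v` spell on the window `W` occurs in `c` at position `i`,
that is, on the cells `i + W`. -/
def IsMarked (W : Finset ℤ) (u v c : ℤ → A) (i : ℤ) : Prop :=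
  (∀ k ∈ W, c (i + k) = u k) ∨ ∀ k ∈ W, c (i + k) = v k

/-- The cell `m` lies on an occurrence at `i` of one of the two words in `c`, at a place where the
two words differ. These are the cells that exchanging the words changes. -/
def IsSite (W : Finset ℤ) (u v c : ℤ → A) (i m : ℤ) : Prop :=
  IsMarked W u v c i ∧ m - i ∈ W ∧ u (m - i) ≠ v (m - i)

/-- In every configuration, exchanging the words at one occurrence leaves all cells of the other
occurrences unchanged. -/
def Separated (W : Finset ℤ) (u v : ℤ → A) : Prop :=
  ∀ c i j m, IsSite W u v c i m → IsMarked W u v c j → m - j ∈ W → i = j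

open Classical in
/-- The map exchanging the words that `u` and `v` spell on `W` at all their occurrences. For
separated words a cell is a site of at most one occurrence, so the choice is harmless. -/
noncomputable def exchange [DecidableEq A] (W : Finset ℤ) (u v c : ℤ → A) (m : ℤ) : A :=
  if h : ∃ i, IsSite W u v c i m then
    Equiv.swap (u (m - h.choose)) (v (m - h.choose)) (c m)
  else c m

variable {W : Finset ℤ} {u v c d : ℤ → A} {i k m : ℤ}

lemma IsMarked.eq_or_eq (hi : IsMarked W u v c i) (hk : k ∈ W) :
    c (i + k) = u k ∨ c (i + k) = v k :=
  hi.imp (fun h => h k hk) fun h => h k hk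

lemma isMarked_self : IsMarked W u v u 0 := Or.inl fun k _ => by rw [zero_add]

lemma isMarked_congr (h : ∀ k ∈ W, c (i + k) = d (i + k)) :
    IsMarked W u v c i ↔ IsMarked W u v d i :=
  or_congr (forall₂_congr fun k hk => by rw [h k hk]) (forall₂_congr fun k hk => by rw [h k hk])

lemma isMarked_translate (t : ℤ) :
    IsMarked W u v (fun m => c (m + t)) i ↔ IsMarked W u v c (i + t) := by
  simp only [IsMarked, add_right_comm]

lemma isSite_translate (t : ℤ) :
    IsSite W u v (fun m => c (m + t)) i m ↔ IsSite W u v c (i + t) (m + t) := by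
  simp only [IsSite, isMarked_translate, add_sub_add_right_eq_sub]

variable [DecidableEq A]

lemma exchange_of_forall_not_isSite (h : ∀ i, ¬ IsSite W u v c i m) :
    exchange W u v c m = c m :=
  dif_neg (not_exists.2 h)

lemma exchange_eq_self (h : ∀ i, ¬ IsMarked W u v c i) : exchange W u v c = c :=
  funext fun _ => exchange_of_forall_not_isSite fun i hs => h i hs.1

namespace Separated

lemma exchange_of_isSite (h : Separated W u v) (hs : IsSite W u v c i m) :
    exchange W u v c m = Equiv.swap (u (m - i)) (v (m - i)) (c m) := by
  have hex : ∃ i, IsSite W u v c i m := ⟨i, hs⟩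
  have hchoose : hex.choose = i := h c _ i m hex.choose_spec hs.1 hs.2.1
  rw [exchange, dif_pos hex, hchoose]

lemma exchange_add_of_isMarked (h : Separated W u v) (hi : IsMarked W u v c i) (hk : k ∈ W) :
    exchange W u v c (i + k) = Equiv.swap (u k) (v k) (c (i + k)) := by
  by_cases huv : u k = v k
  · rw [huv, Equiv.swap_self, Equiv.refl_apply, exchange_of_forall_not_isSite]
    intro j hj
    obtain rfl : j = i := h c j i _ hj hi (by rwa [add_sub_cancel_left])
    exact hj.2.2 (by rwa [add_sub_cancel_left])
  · rw [h.exchange_of_isSite (i := i) ⟨hi, by simpa using ⟨hk, huv⟩⟩, add_sub_cancel_left]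

lemma exchange_self (h : Separated W u v) (hk : k ∈ W) : exchange W u v u k = v k := by
  simpa using h.exchange_add_of_isMarked isMarked_self hk

lemma isMarked_exchange (h : Separated W u v) (hi : IsMarked W u v c i) :
    IsMarked W u v (exchange W u v c) i := by
  refine hi.symm.imp (fun hv k hk => ?_) fun hu k hk => ?_
  · rw [h.exchange_add_of_isMarked hi hk, hv k hk, Equiv.swap_apply_right]
  · rw [h.exchange_add_of_isMarked hi hk, hu k hk, Equiv.swap_apply_left]

/-- No occurrence is created: old occurrences persist, so a new one would be separated from all of
them, hence would consist of unchanged cells. -/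
lemma isMarked_exchange_iff (h : Separated W u v) :
    IsMarked W u v (exchange W u v c) i ↔ IsMarked W u v c i := by
  refine ⟨fun hnew => ?_, h.isMarked_exchange⟩
  by_contra hi
  refine hi ((isMarked_congr fun k hk => exchange_of_forall_not_isSite fun j hj => hi ?_).1 hnew)
  have hji : j = i :=
    h _ j i _ ⟨h.isMarked_exchange hj.1, hj.2⟩ hnew (by rwa [add_sub_cancel_left])
  exact hji ▸ hj.1

lemma isSite_exchange_iff (h : Separated W u v) :
    IsSite W u v (exchange W u v c) i m ↔ IsSite W u v c i m :=
  and_congr_left' h.isMarked_exchange_iff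

lemma exchange_exchange (h : Separated W u v) (c : ℤ → A) :
    exchange W u v (exchange W u v c) = c := by
  funext m
  by_cases hs : ∃ i, IsSite W u v c i m
  · obtain ⟨i, hi⟩ := hs
    rw [h.exchange_of_isSite (h.isSite_exchange_iff.2 hi), h.exchange_of_isSite hi,
      Equiv.swap_apply_self]
  · have hs' := not_exists.1 hs
    rw [exchange_of_forall_not_isSite fun i => h.isSite_exchange_iff.not.2 (hs' i),
      exchange_of_forall_not_isSite hs']

lemma exchange_translate (h : Separated W u v) (c : ℤ → A) (t : ℤ) :
    exchange W u v (fun m => c (m + t)) = fun m => exchange W u v c (m + t) := by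
  funext m
  by_cases hs : ∃ i, IsSite W u v (fun m => c (m + t)) i m
  · obtain ⟨i, hi⟩ := hs
    rw [h.exchange_of_isSite hi, h.exchange_of_isSite ((isSite_translate t).1 hi),
      add_sub_add_right_eq_sub]
  · have hs' := not_exists.1 hs
    rw [exchange_of_forall_not_isSite hs', exchange_of_forall_not_isSite fun i hi =>
      hs' (i - t) ((isSite_translate t).2 ((sub_add_cancel i t).symm ▸ hi))]

end Separated

lemma exchange_congr (hm : c m = d m) (h : ∀ l ∈ W, ∀ k ∈ W, c (m - l + k) = d (m - l + k)) :
    exchange W u v c m = exchange W u v d m := by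
  have hsite : (IsSite W u v c · m) = (IsSite W u v d · m) := by
    funext i
    refine propext (and_congr_left fun ⟨hi, _⟩ => isMarked_congr fun k hk => ?_)
    simpa only [sub_sub_cancel] using h (m - i) hi k hk
  unfold exchange
  rw [hsite, hm]

variable [TopologicalSpace A] [DiscreteTopology A]

lemma continuous_exchange : Continuous (exchange W u v) := by
  refine continuous_pi fun m => continuous_iff_continuousAt.2 fun c => ?_
  have hcell : ∀ k : ℤ, ∀ᶠ d in nhds c, d k = c k := fun k =>
    (continuous_apply k).continuousAt.eventually_mem (by simp : {c k} ∈ nhds (c k))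
  have hwindow : ∀ᶠ d in nhds c, ∀ l ∈ W, ∀ k ∈ W, d (m - l + k) = c (m - l + k) := by
    simp only [eventually_all_finset]
    exact fun l _ k _ => hcell _
  refine tendsto_nhds_of_eventually_eq ?_
  filter_upwards [hcell m, hwindow] with d hm hd using exchange_congr hm hd

/-- Exchanging two separated words, as a homeomorphism of `A^ℤ`. -/
noncomputable def exchangeHomeo (h : Separated W u v) : (ℤ → A) ≃ₜ (ℤ → A) where
  toFun := exchange W u v
  invFun := exchange W u v
  left_inv := h.exchange_exchange
  right_inv := h.exchange_exchange
  continuous_toFun := continuous_exchange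
  continuous_invFun := continuous_exchange

lemma exchangeHomeo_mem_shiftAut (h : Separated W u v) : exchangeHomeo h ∈ ShiftAut A :=
  Subgroup.mem_centralizer_singleton_iff.2 <| Homeomorph.ext fun c => h.exchange_translate c 1

end Exchange

/-! ### Separated words with a constant prefix -/

section PrefixWords

variable {A : Type*} {a : A} {u v c : ℤ → A} {W : Finset ℤ} {i m n M N R : ℤ}

lemma IsMarked.succ_ne (hi : IsMarked W u v c i) (hu : IsPrefixEnd a 0 u)
    (hv : IsPrefixEnd a 0 v) (h1 : 1 ∈ W) : c (i + 1) ≠ a := by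
  rcases hi.eq_or_eq h1 with h | h
  · exact h ▸ hu.succ_ne
  · exact h ▸ hv.succ_ne

lemma IsMarked.lt_or_add_le (hi : IsMarked (Finset.Ioc (-N) R) u v c i) (hu : IsPrefixEnd a 0 u)
    (hv : IsPrefixEnd a 0 v) (hR : 0 ≤ R) (hm : c m ≠ a) : i < m ∨ m + N ≤ i := by
  by_contra! hmi
  have hk : m - i ∈ Finset.Ioc (-N) R := Finset.mem_Ioc.2 ⟨by omega, by omega⟩
  rw [← add_sub_cancel i m] at hm
  rcases hi.eq_or_eq hk with h | h
  · exact hm (h.trans (hu.eq_of_le _ (by omega)))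
  · exact hm (h.trans (hv.eq_of_le _ (by omega)))

lemma not_isMarked_const (hu : IsPrefixEnd a 0 u) (hv : IsPrefixEnd a 0 v) (h0 : 0 ∈ W)
    (h1 : 1 ∈ W) (b : A) : ¬ IsMarked W u v (Function.const ℤ b) i := by
  intro hi
  have hba : b = a := by
    rcases hi.eq_or_eq h0 with h | h
    · exact h.trans (hu.eq_of_le 0 le_rfl)
    · exact h.trans (hv.eq_of_le 0 le_rfl)
  exact hi.succ_ne hu hv h1 hba

lemma separated_of_forall_lt (hu : IsPrefixEnd a 0 u) (hv : IsPrefixEnd a 0 v)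
    (huv : ∀ k > n, u k = v k)
    (hsep : ∀ c i j, IsMarked (Finset.Ioc (-N) R) u v c i → IsMarked (Finset.Ioc (-N) R) u v c j →
      i < j → i + R ≤ j ∧ i + n + N ≤ j) :
    Separated (Finset.Ioc (-N) R) u v := by
  rintro c i j m ⟨hi, hmi, hne⟩ hj hmj
  rw [Finset.mem_Ioc] at hmi hmj
  have hpos : 0 < m - i :=
    not_le.1 fun hle => hne ((hu.eq_of_le _ hle).trans (hv.eq_of_le _ hle).symm)
  have hle : m - i ≤ n := not_lt.1 fun hlt => hne (huv _ hlt)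
  rcases lt_trichotomy i j with hij | hij | hij
  · have := hsep c i j hi hj hij
    omega
  · exact hij
  · have := hsep c j i hj hi hij
    omega

lemma separated_of_ne_at (hu : IsPrefixEnd a 0 u) (hv : IsPrefixEnd a 0 v)
    (huv : ∀ k > M, u k = v k) (huM : u M ≠ a) (hvM : v M ≠ a) :
    Separated (Finset.Ioc (-M) M) u v := by
  have hM : 0 < M := not_le.1 fun hle => huM (hu.eq_of_le M hle)
  refine separated_of_forall_lt hu hv huv fun c i j hi hj hij => ?_
  have hfirst : c (i + 1) ≠ a := hi.succ_ne hu hv (Finset.mem_Ioc.2 ⟨by omega, by omega⟩)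
  have hlast : c (i + M) ≠ a := by
    rcases hi.eq_or_eq (Finset.mem_Ioc.2 ⟨by omega, le_rfl⟩) with h | h
    · rwa [h]
    · rwa [h]
  have := hj.lt_or_add_le hu hv hM.le hfirst
  have := hj.lt_or_add_le hu hv hM.le hlast
  omega

lemma separated_of_eq_tail (hu : IsPrefixEnd a 0 u) (hv : IsPrefixEnd a 0 v)
    (hun : ∀ k > n, u k = a) (hvn : ∀ k > n, v k = a) :
    Separated (Finset.Ioc (-n) (3 * n)) u v := by
  have hn : 1 ≤ n := not_lt.1 fun hlt => hu.succ_ne (hun _ hlt)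
  have h1 : 1 ∈ Finset.Ioc (-n) (3 * n) := Finset.mem_Ioc.2 ⟨by omega, by omega⟩
  refine separated_of_forall_lt hu hv (fun k hk => (hun k hk).trans (hvn k hk).symm)
    fun c i j hi hj hij => ?_
  have hgap : j < i + 1 ∨ i + 1 + n ≤ j :=
    hj.lt_or_add_le hu hv (by omega) (hi.succ_ne hu hv h1)
  have hfar : i + 3 * n ≤ j := by
    by_contra! hclose
    apply hj.succ_ne hu hv h1
    rw [← add_sub_cancel i (j + 1)]
    rcases hi.eq_or_eq (k := j + 1 - i) (Finset.mem_Ioc.2 ⟨by omega, by omega⟩) with h | h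
    · exact h.trans (hun _ (by omega))
    · exact h.trans (hvn _ (by omega))
  omega

lemma exists_window_separated (hu : IsPrefixEnd a 0 u) (hv : IsPrefixEnd a 0 v)
    (huv : ∀ k > n, u k = v k) : ∃ W, Finset.Icc 0 n ⊆ W ∧ Separated W u v := by
  by_cases hM : ∃ M > n, u M ≠ a
  · obtain ⟨M, hnM, huM⟩ := hM
    have hpos : 0 < M := not_le.1 fun hle => huM (hu.eq_of_le M hle)
    refine ⟨_, fun k hk => ?_, separated_of_ne_at hu hv (fun k hk => huv k (hnM.trans hk)) huM
      (huv M hnM ▸ huM)⟩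
    simp only [Finset.mem_Icc, Finset.mem_Ioc] at hk ⊢
    omega
  · push Not at hM
    have hn : 1 ≤ n := not_lt.1 fun hlt => hu.succ_ne (hM _ hlt)
    refine ⟨_, fun k hk => ?_, separated_of_eq_tail hu hv hM fun k hk => huv k hk ▸ hM k hk⟩
    simp only [Finset.mem_Icc, Finset.mem_Ioc] at hk ⊢
    omega

lemma Separated.isPrefixEnd_exchange [DecidableEq A] (h : Separated W u v) (hu : IsPrefixEnd a 0 u)
    (hv : IsPrefixEnd a 0 v) (h1 : 1 ∈ W) : IsPrefixEnd a 0 (exchange W u v u) where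
  eq_of_le m hm := by
    rw [exchange_of_forall_not_isSite, hu.eq_of_le m hm]
    rintro i ⟨hi, -, hne⟩
    have hpos : 0 < i + 1 := not_le.1 fun hle => hi.succ_ne hu hv h1 (hu.eq_of_le _ hle)
    exact hne ((hu.eq_of_le _ (by omega)).trans (hv.eq_of_le _ (by omega)).symm)
  succ_ne := by
    rw [zero_add, h.exchange_self h1]
    exact hv.succ_ne

end PrefixWords

section Minimality

variable {A : Type*} [TopologicalSpace A] [DiscreteTopology A] {a : A}

lemma exchangeHomeo_mem_Gstar [DecidableEq A] {W : Finset ℤ} {u v : ℤ → A} (h : Separated W u v)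
    (hu : IsPrefixEnd a 0 u) (hv : IsPrefixEnd a 0 v) (h0 : 0 ∈ W) (h1 : 1 ∈ W) :
    exchangeHomeo h ∈ Gstar A :=
  mem_Gstar_of_apply_const (exchangeHomeo_mem_shiftAut h) fun b =>
    exchange_eq_self fun _ => not_isMarked_const hu hv h0 h1 b

lemma exists_mem_Gstar_omegaAct_eqOn {x y : ℕ → A} (hx : x ∈ OmegaA A a) (hy : y ∈ OmegaA A a)
    (n : ℕ) : ∃ g ∈ Gstar A, Set.EqOn (omegaAct A g x) y (Set.Iic n) := by
  classical
  set u := phiMap A x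
  set v : ℤ → A := fun k => if k ≤ n + 1 then phiMap A y k else u k
  have hv_eq : ∀ k : ℤ, k ≤ n + 1 → v k = phiMap A y k := fun _ hk => if_pos hk
  have hu : IsPrefixEnd a 0 u := isPrefixEnd_phiMap hx
  have hv : IsPrefixEnd a 0 v :=
    ⟨fun m hm => (hv_eq m (by omega)).trans ((isPrefixEnd_phiMap hy).eq_of_le m hm),
      hv_eq (0 + 1) (by omega) ▸ (isPrefixEnd_phiMap hy).succ_ne⟩
  have huv : ∀ k : ℤ, k > n + 1 → u k = v k := fun _ hk => (if_neg (not_le.2 hk)).symm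
  obtain ⟨W, hW, hsep⟩ := exists_window_separated hu hv huv
  have hmem : ∀ k : ℤ, 0 ≤ k → k ≤ n + 1 → k ∈ W := fun k h0 hn => hW (Finset.mem_Icc.2 ⟨h0, hn⟩)
  have h1 : 1 ∈ W := hmem 1 (by omega) (by omega)
  refine ⟨exchangeHomeo hsep,
    exchangeHomeo_mem_Gstar hsep hu hv (hmem 0 le_rfl (by omega)) h1, fun k hk => ?_⟩
  have hkn : (k : ℤ) ≤ n + 1 := by
    have := Set.mem_Iic.1 hk
    omega
  calc omegaAct A (exchangeHomeo hsep) x k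
      = exchange W u v u (0 + k) := (hsep.isPrefixEnd_exchange hu hv h1).psiMap_apply k
    _ = v k := by rw [zero_add, hsep.exchange_self (hmem k (by omega) hkn)]
    _ = y k := by rw [hv_eq k hkn, phiMap_natCast]

end Minimality

theorem gstar_minimal_omega0_general
    (A : Type*) [TopologicalSpace A] [DiscreteTopology A] (a : A) :
    ∀ x ∈ OmegaA A a,
      OmegaA A a ⊆ closure {y : ℕ → A | ∃ g ∈ Gstar A, omegaAct A g x = y} := by
  intro x hx y hy
  choose g hg hgy using exists_mem_Gstar_omegaAct_eqOn hx hy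
  have hlim : Tendsto (fun n => omegaAct A (g n) x) atTop (nhds y) :=
    tendsto_pi_nhds.2 fun k => tendsto_nhds_of_eventually_eq <|
      (eventually_ge_atTop k).mono fun n hkn => hgy n hkn
  exact mem_closure_of_tendsto hlim (Eventually.of_forall fun n => ⟨g n, hg n, rfl⟩)

/-- The action of `G*` on `Ω^0` is minimal: every `G*`-orbit is dense
in `Ω^0`. -/
theorem gstar_minimal_omega0
    (A : Type*) [Fintype A] [TopologicalSpace A] [DiscreteTopology A] [Zero A]
    (hA : 2 ≤ Fintype.card A) :
    ∀ x ∈ OmegaA A 0,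
      OmegaA A 0 ⊆ closure {y : ℕ → A | ∃ g ∈ Gstar A, omegaAct A g x = y} :=
  gstar_minimal_omega0_general A 0
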